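/- Cut elimination: if a JL-formula is provable in the tableau system JL^e_CS + (cut), then it is also provable in JL^e_CS (without the unrestricted cut rules). -/

import Mathlib

namespace JLTab

/-- Justification terms: variables, constants, application, sum,
verifier `!`, negative verifier `?`, weak negative verifier `?̄`. -/
inductive Term : Type
  | var : ℕ → Term
  | const : ℕ → Term
  | app : Term → Term → Term
  | sum : Term → Term → Term
  | bang : Term → Term
  | quest : Term → Term
  | qbar : Term → Term
  deriving DecidableEq

/-- JL-formulas: `A ::= p | ⊥ | ¬A | A → A | t:A`. -/
inductive Fml : Type
  | prop : ℕ → Fml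
  | bot : Fml
  | neg : Fml → Fml
  | imp : Fml → Fml → Fml
  | box : Term → Fml → Fml
  deriving DecidableEq

/-- A justification logic JL is J extended by any combination of jT, jD, j4, jB, j5. -/
structure Logic where
  hasT : Bool
  hasD : Bool
  has4 : Bool
  hasB : Bool
  has5 : Bool

/-- The basic justification logic J. -/
def Logic.J : Logic := ⟨false, false, false, false, false⟩

/-- The logic of proofs LP = JT4. -/
def Logic.LP : Logic := ⟨true, false, true, false, false⟩

/-- The logic JT45. -/
def Logic.JT45 : Logic := ⟨true, false, true, false, true⟩

/-- Propositional evaluation of a formula, treating propositional variables and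
formulas `t:A` as atoms. -/
def evalProp (v : Fml → Bool) : Fml → Bool
  | .prop n => v (.prop n)
  | .bot => false
  | .neg A => !(evalProp v A)
  | .imp A B => !(evalProp v A) || evalProp v B
  | .box t A => v (.box t A)

/-- A propositional tautology. -/
def IsTaut (A : Fml) : Prop := ∀ v : Fml → Bool, evalProp v A = true

/-- Axiom instances of the justification logic `L`. -/
inductive Axm (L : Logic) : Fml → Prop
  | taut {A} : IsTaut A → Axm L A
  | sumL {s t A} : Axm L (.imp (.box s A) (.box (.sum s t) A))
  | sumR {s t A} : Axm L (.imp (.box s A) (.box (.sum t s) A))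
  | jK {s t A B} :
      Axm L (.imp (.box s (.imp A B)) (.imp (.box t A) (.box (.app s t) B)))
  | jT {t A} : L.hasT = true → Axm L (.imp (.box t A) A)
  | jD {t} : L.hasD = true → Axm L (.imp (.box t .bot) .bot)
  | j4 {t A} : L.has4 = true → Axm L (.imp (.box t A) (.box (.bang t) (.box t A)))
  | jB {t A} : L.hasB = true →
      Axm L (.imp (.neg A) (.box (.qbar t) (.neg (.box t A))))
  | j5 {t A} : L.has5 = true →
      Axm L (.imp (.neg (.box t A)) (.box (.quest t) (.neg (.box t A))))

/-- Formulas of the form `c_{i_n} : ⋯ : c_{i_1} : A` (n ≥ 1) with `A` an axiom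
instance of `L`; exactly the formulas produced by Iterated Axiom Necessitation. -/
inductive IsIAN (L : Logic) : Fml → Prop
  | base {c A} : Axm L A → IsIAN L (.box (.const c) A)
  | step {c F} : IsIAN L F → IsIAN L (.box (.const c) F)

/-- A constant specification for `L`: a downward closed set of formulas of the
form `c_{i_n} : ⋯ : c_{i_1} : A` with `A` an axiom instance of `L`. -/
structure ConstSpec (L : Logic) where
  set : Set Fml
  mem_ian : ∀ F ∈ set, IsIAN L F
  downward : ∀ c F, Fml.box (Term.const c) F ∈ set → IsIAN L F → F ∈ set

/-- The Hilbert system JL_CS: axioms of `L`, Modus Ponens, and Iterated Axiom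
Necessitation restricted to the constant specification `cs`. -/
inductive Deriv (L : Logic) (cs : ConstSpec L) : Fml → Prop
  | axm {A} : Axm L A → Deriv L cs A
  | mp {A B} : Deriv L cs (.imp A B) → Deriv L cs A → Deriv L cs B
  | ian {F} : F ∈ cs.set → Deriv L cs F

/-- An M-model (Mkrtychev model): an admissible evidence function together with
a valuation of propositional variables. -/
structure MModel where
  ev : Term → Set Fml
  val : ℕ → Prop

/-- Truth in an M-model; `t:A` is true iff `A ∈ E(t)`. -/
def MModel.sat (M : MModel) : Fml → Prop
  | .prop n => M.val n
  | .bot => False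
  | .neg A => ¬ M.sat A
  | .imp A B => M.sat A → M.sat B
  | .box t A => A ∈ M.ev t

/-- `M` is an M-model for JL_CS: conditions E1–E3 always, and E4–E8 according to
the extra axioms of the logic `L`. -/
structure IsModel (L : Logic) (cs : ConstSpec L) (M : MModel) : Prop where
  e1 : ∀ s t A B, Fml.imp A B ∈ M.ev s → A ∈ M.ev t → B ∈ M.ev (.app s t)
  e2l : ∀ s t, M.ev s ⊆ M.ev (.sum s t)
  e2r : ∀ s t, M.ev t ⊆ M.ev (.sum s t)
  e3 : ∀ c F, Fml.box (.const c) F ∈ cs.set → F ∈ M.ev (.const c)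
  e4 : L.hasT = true → ∀ t A, A ∈ M.ev t → M.sat A
  e5 : L.hasD = true → ∀ t, Fml.bot ∉ M.ev t
  e6 : L.has4 = true → ∀ t A, A ∈ M.ev t → Fml.box t A ∈ M.ev (.bang t)
  e7 : L.hasB = true → ∀ t A, ¬ M.sat A → Fml.neg (.box t A) ∈ M.ev (.qbar t)
  e8 : L.has5 = true → ∀ t A, A ∉ M.ev t → Fml.neg (.box t A) ∈ M.ev (.quest t)

/-- `A` is JL_CS-valid: true in every M-model of JL_CS. -/
def Valid (L : Logic) (cs : ConstSpec L) (A : Fml) : Prop :=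
  ∀ M : MModel, IsModel L cs M → M.sat A

/-- `Subf A B`: `A` is a subformula of `B`. -/
inductive Subf : Fml → Fml → Prop
  | refl (A) : Subf A A
  | neg {A B} : Subf A B → Subf A (.neg B)
  | impL {A B C} : Subf A B → Subf A (.imp B C)
  | impR {A C B} : Subf A C → Subf A (.imp B C)
  | box {A B t} : Subf A B → Subf A (.box t B)

/-- `A` is a CS-subformula of the root set `R`: a subformula of a formula in
`R ∪ CS`. -/
def CSSub {L : Logic} (cs : ConstSpec L) (R : Set Fml) (A : Fml) : Prop :=
  (∃ B ∈ R, Subf A B) ∨ (∃ F ∈ cs.set, Subf A F)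

/-- `A` is a weak CS-subformula of the root set `R`: a subformula, or the
negation of a subformula, of a formula in `R ∪ CS`. -/
def WeakCSSub {L : Logic} (cs : ConstSpec L) (R : Set Fml) (A : Fml) : Prop :=
  CSSub cs R A ∨ ∃ C, A = Fml.neg C ∧ CSSub cs R C

/-- `SubTm u t`: `u` is a subterm of `t`. -/
inductive SubTm : Term → Term → Prop
  | refl (t) : SubTm t t
  | appL {u s t} : SubTm u s → SubTm u (.app s t)
  | appR {u s t} : SubTm u t → SubTm u (.app s t)
  | sumL {u s t} : SubTm u s → SubTm u (.sum s t)
  | sumR {u s t} : SubTm u t → SubTm u (.sum s t)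
  | bang {u t} : SubTm u t → SubTm u (.bang t)
  | quest {u t} : SubTm u t → SubTm u (.quest t)
  | qbar {u t} : SubTm u t → SubTm u (.qbar t)

/-- `OccT u A`: the term `u` occurs in the formula `A`. -/
inductive OccT (u : Term) : Fml → Prop
  | neg {A} : OccT u A → OccT u (.neg A)
  | impL {A B} : OccT u A → OccT u (.imp A B)
  | impR {A B} : OccT u B → OccT u (.imp A B)
  | boxT {t A} : SubTm u t → OccT u (.box t A)
  | boxF {t A} : OccT u A → OccT u (.box t A)

/-- The term `u` occurs in (some formula of) the root set `R`. -/
def OccRoot (R : Set Fml) (u : Term) : Prop := ∃ B ∈ R, OccT u B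

/-- Nodes of a tableau: JL-formulas `A`, and evidential formulas
`[t,A]` (`pos`) and `∼[t,A]` (`neg`). -/
inductive Node : Type
  | fml : Fml → Node
  | pos : Term → Fml → Node
  | neg : Term → Fml → Node
  deriving DecidableEq

/-- `TabN L cs pb cut R Γ n`: the branch `Γ` of a tableau with root set `R` has
a closed tableau continuation using `n` rule applications.  The flag `pb`
enables the analytic rules (PB), (PB_e); the flag `cut` enables the
unrestricted cut rules (cut_f), (cut_e).  The rules (e), (e_⊥), (!), (?̄), (?)
are enabled according to the extra axioms of the logic `L`.  Base cases are the
four branch-closure conditions. -/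
inductive TabN (L : Logic) (cs : ConstSpec L) (pb cut : Bool) (R : Set Fml) :
    Set Node → ℕ → Prop
  | closeF {Γ A} : Node.fml A ∈ Γ → Node.fml (.neg A) ∈ Γ → TabN L cs pb cut R Γ 0
  | closeE {Γ t A} : Node.pos t A ∈ Γ → Node.neg t A ∈ Γ → TabN L cs pb cut R Γ 0
  | closeBot {Γ} : Node.fml .bot ∈ Γ → TabN L cs pb cut R Γ 0
  | closeCS {Γ c F} : Fml.box (.const c) F ∈ cs.set →
      Node.fml (.neg (.box (.const c) F)) ∈ Γ → TabN L cs pb cut R Γ 0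
  | fNeg {Γ A n} : Node.fml (.neg (.neg A)) ∈ Γ →
      TabN L cs pb cut R (insert (Node.fml A) Γ) n → TabN L cs pb cut R Γ (n + 1)
  | fImp {Γ A B n} : Node.fml (.neg (.imp A B)) ∈ Γ →
      TabN L cs pb cut R (insert (Node.fml A) (insert (Node.fml (.neg B)) Γ)) n →
      TabN L cs pb cut R Γ (n + 1)
  | tImp {Γ A B m n} : Node.fml (.imp A B) ∈ Γ →
      TabN L cs pb cut R (insert (Node.fml (.neg A)) Γ) m →
      TabN L cs pb cut R (insert (Node.fml B) Γ) n →
      TabN L cs pb cut R Γ (m + n + 1)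
  | te {Γ t A n} : Node.fml (.box t A) ∈ Γ →
      TabN L cs pb cut R (insert (Node.pos t A) Γ) n → TabN L cs pb cut R Γ (n + 1)
  | fe {Γ t A n} : Node.fml (.neg (.box t A)) ∈ Γ →
      TabN L cs pb cut R (insert (Node.neg t A) Γ) n → TabN L cs pb cut R Γ (n + 1)
  | plusL {Γ t s A n} : Node.neg (.sum t s) A ∈ Γ →
      TabN L cs pb cut R (insert (Node.neg t A) Γ) n → TabN L cs pb cut R Γ (n + 1)
  | plusR {Γ t s A n} : Node.neg (.sum t s) A ∈ Γ →
      TabN L cs pb cut R (insert (Node.neg s A) Γ) n → TabN L cs pb cut R Γ (n + 1)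
  | appR {Γ s t A B n} : Node.pos s (.imp A B) ∈ Γ → Node.pos t A ∈ Γ →
      CSSub cs R (.imp A B) → OccRoot R (.app s t) →
      TabN L cs pb cut R (insert (Node.pos (.app s t) B) Γ) n →
      TabN L cs pb cut R Γ (n + 1)
  | rulePB {Γ A m n} : pb = true → CSSub cs R A →
      TabN L cs pb cut R (insert (Node.fml A) Γ) m →
      TabN L cs pb cut R (insert (Node.fml (.neg A)) Γ) n →
      TabN L cs pb cut R Γ (m + n + 1)
  | rulePBe {Γ t A m n} : pb = true → CSSub cs R A → OccRoot R t →
      TabN L cs pb cut R (insert (Node.pos t A) Γ) m →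
      TabN L cs pb cut R (insert (Node.neg t A) Γ) n →
      TabN L cs pb cut R Γ (m + n + 1)
  | cutF {Γ A m n} : cut = true →
      TabN L cs pb cut R (insert (Node.fml A) Γ) m →
      TabN L cs pb cut R (insert (Node.fml (.neg A)) Γ) n →
      TabN L cs pb cut R Γ (m + n + 1)
  | cutE {Γ t A m n} : cut = true →
      TabN L cs pb cut R (insert (Node.pos t A) Γ) m →
      TabN L cs pb cut R (insert (Node.neg t A) Γ) n →
      TabN L cs pb cut R Γ (m + n + 1)
  | ruleT {Γ t A n} : L.hasT = true → Node.pos t A ∈ Γ →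
      TabN L cs pb cut R (insert (Node.fml A) Γ) n → TabN L cs pb cut R Γ (n + 1)
  | ruleD {Γ t n} : L.hasD = true → Node.pos t .bot ∈ Γ →
      TabN L cs pb cut R (insert (Node.fml .bot) Γ) n → TabN L cs pb cut R Γ (n + 1)
  | rule4 {Γ t A n} : L.has4 = true → Node.neg (.bang t) (.box t A) ∈ Γ →
      TabN L cs pb cut R (insert (Node.neg t A) Γ) n → TabN L cs pb cut R Γ (n + 1)
  | ruleB {Γ t A n} : L.hasB = true → Node.neg (.qbar t) (.neg (.box t A)) ∈ Γ →
      TabN L cs pb cut R (insert (Node.fml A) Γ) n → TabN L cs pb cut R Γ (n + 1)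
  | rule5 {Γ t A n} : L.has5 = true → Node.neg (.quest t) (.neg (.box t A)) ∈ Γ →
      TabN L cs pb cut R (insert (Node.pos t A) Γ) n → TabN L cs pb cut R Γ (n + 1)

/-- There is a closed tableau below the branch `Γ` (root set `R`). -/
def Tab (L : Logic) (cs : ConstSpec L) (pb cut : Bool) (R : Set Fml)
    (Γ : Set Node) : Prop :=
  ∃ n, TabN L cs pb cut R Γ n

/-- A tableau proof of `A`: a closed tableau whose root is `¬A`. -/
def TabProof (L : Logic) (cs : ConstSpec L) (pb cut : Bool) (A : Fml) : Prop :=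
  Tab L cs pb cut {Fml.neg A} {Node.fml (Fml.neg A)}

/-- A single application of a JL^e_CS-tableau rule to the branch `Γ` (root set
`R`), producing the list of extended branches (one for a non-branching rule,
two for a branching rule). -/
inductive RuleApp (L : Logic) (cs : ConstSpec L) (R : Set Fml) (Γ : Set Node) :
    List (Set Node) → Prop
  | fNeg {A} : Node.fml (.neg (.neg A)) ∈ Γ →
      RuleApp L cs R Γ [insert (Node.fml A) Γ]
  | fImp {A B} : Node.fml (.neg (.imp A B)) ∈ Γ →
      RuleApp L cs R Γ [insert (Node.fml A) (insert (Node.fml (.neg B)) Γ)]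
  | tImp {A B} : Node.fml (.imp A B) ∈ Γ →
      RuleApp L cs R Γ [insert (Node.fml (.neg A)) Γ, insert (Node.fml B) Γ]
  | te {t A} : Node.fml (.box t A) ∈ Γ → RuleApp L cs R Γ [insert (Node.pos t A) Γ]
  | fe {t A} : Node.fml (.neg (.box t A)) ∈ Γ →
      RuleApp L cs R Γ [insert (Node.neg t A) Γ]
  | plusL {t s A} : Node.neg (.sum t s) A ∈ Γ →
      RuleApp L cs R Γ [insert (Node.neg t A) Γ]
  | plusR {t s A} : Node.neg (.sum t s) A ∈ Γ →
      RuleApp L cs R Γ [insert (Node.neg s A) Γ]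
  | appR {s t A B} : Node.pos s (.imp A B) ∈ Γ → Node.pos t A ∈ Γ →
      CSSub cs R (.imp A B) → OccRoot R (.app s t) →
      RuleApp L cs R Γ [insert (Node.pos (.app s t) B) Γ]
  | rulePB {A} : CSSub cs R A →
      RuleApp L cs R Γ [insert (Node.fml A) Γ, insert (Node.fml (.neg A)) Γ]
  | rulePBe {t A} : CSSub cs R A → OccRoot R t →
      RuleApp L cs R Γ [insert (Node.pos t A) Γ, insert (Node.neg t A) Γ]
  | ruleT {t A} : L.hasT = true → Node.pos t A ∈ Γ →
      RuleApp L cs R Γ [insert (Node.fml A) Γ]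
  | ruleD {t} : L.hasD = true → Node.pos t .bot ∈ Γ →
      RuleApp L cs R Γ [insert (Node.fml .bot) Γ]
  | rule4 {t A} : L.has4 = true → Node.neg (.bang t) (.box t A) ∈ Γ →
      RuleApp L cs R Γ [insert (Node.neg t A) Γ]
  | ruleB {t A} : L.hasB = true → Node.neg (.qbar t) (.neg (.box t A)) ∈ Γ →
      RuleApp L cs R Γ [insert (Node.fml A) Γ]
  | rule5 {t A} : L.has5 = true → Node.neg (.quest t) (.neg (.box t A)) ∈ Γ →
      RuleApp L cs R Γ [insert (Node.pos t A) Γ]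

/-- Satisfaction of tableau nodes in an M-model: `M` satisfies `[t,A]` iff
`A ∈ E(t)`, and satisfies `∼[t,A]` iff `A ∉ E(t)`. -/
def NodeSat (M : MModel) : Node → Prop
  | .fml A => M.sat A
  | .pos t A => A ∈ M.ev t
  | .neg t A => A ∉ M.ev t

/-- Branches reachable from the initial branch by tableau rule applications. -/
inductive Reach (L : Logic) (cs : ConstSpec L) (R : Set Fml) :
    Set Node → Set Node → Prop
  | refl (Γ) : Reach L cs R Γ Γ
  | step {Γ Γ' Γ'' exts} : Reach L cs R Γ Γ' → RuleApp L cs R Γ' exts →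
      Γ'' ∈ exts → Reach L cs R Γ Γ''

/-- One non-redundant tableau construction step: a rule application properly
extending the branch. -/
def Step (L : Logic) (cs : ConstSpec L) (R : Set Fml) (Γ Γ' : Set Node) : Prop :=
  ∃ exts, RuleApp L cs R Γ exts ∧ Γ' ∈ exts ∧ Γ ⊂ Γ'

/-- The term is in the language of the logic `L` (which contains those
operations occurring in the axioms of `L`). -/
def TermInLang (L : Logic) : Term → Prop
  | .var _ => True
  | .const _ => True
  | .app s t => TermInLang L s ∧ TermInLang L t
  | .sum s t => TermInLang L s ∧ TermInLang L t
  | .bang t => L.has4 = true ∧ TermInLang L t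
  | .quest t => L.has5 = true ∧ TermInLang L t
  | .qbar t => L.hasB = true ∧ TermInLang L t

/-- The formula is in the language of the logic `L`. -/
def FmlInLang (L : Logic) : Fml → Prop
  | .prop _ => True
  | .bot => True
  | .neg A => FmlInLang L A
  | .imp A B => FmlInLang L A ∧ FmlInLang L B
  | .box t A => TermInLang L t ∧ FmlInLang L A

/-- The initial branch of a tableau for a finite set `S` of formulas. -/
def branchOf (S : Finset Fml) : Set Node := Node.fml '' (↑S : Set Fml)

end JLTab

/-!
An M-model is sound for the cut rules, since `M` satisfies one of `A`, `¬A` and one of `[t,A]`,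
`∼[t,A]`. It therefore suffices that a branch without a closed cut-free continuation be
satisfiable. Such a branch extends, by Zorn's lemma, to a maximal one, which is saturated under all
rules and induces a structure satisfying it: `A` is admitted as evidence for `t` if `[t,A]` is on
the branch, or if the closure conditions for `+`, `!`, `?̄`, `?` force it. The conditions for the
unary operations can be imposed by recursion on `A`, because they refer back to proper subformulas
of `A` only, and those for `+` keep `A` fixed. Condition E1 for `·` cannot, so the structure need
not be an M-model. But (PB_e) decides `[t,A]` for every CS-subformula `A` and every term `t` of the
root, so the structure satisfies the instances of E1 that match the side conditions of the rule (·),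
and soundness uses no others.
-/

namespace JLTab

variable {L : Logic} {cs : ConstSpec L} {pb cut : Bool} {R : Set Fml} {Γ : Set Node}
  {exts : List (Set Node)} {M : MModel} {A B : Fml} {s t u : Term} {X Y : Node}

/-! ### Subformulas and subterms -/

theorem Subf.trans {C : Fml} (hAB : Subf A B) (hBC : Subf B C) : Subf A C := by
  induction hBC with
  | refl => exact hAB
  | neg _ ih => exact .neg ih
  | impL _ ih => exact .impL ih
  | impR _ ih => exact .impR ih
  | box _ ih => exact .box ih

theorem CSSub.of_subf (hB : CSSub cs R B) (hAB : Subf A B) : CSSub cs R A :=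
  hB.imp (fun ⟨C, hC, hBC⟩ => ⟨C, hC, hAB.trans hBC⟩) fun ⟨C, hC, hBC⟩ => ⟨C, hC, hAB.trans hBC⟩

theorem SubTm.trans (hst : SubTm s t) (htu : SubTm t u) : SubTm s u := by
  induction htu with
  | refl => exact hst
  | appL _ ih => exact .appL ih
  | appR _ ih => exact .appR ih
  | sumL _ ih => exact .sumL ih
  | sumR _ ih => exact .sumR ih
  | bang _ ih => exact .bang ih
  | quest _ ih => exact .quest ih
  | qbar _ ih => exact .qbar ih

theorem OccT.of_subTm (ht : OccT t A) (hst : SubTm s t) : OccT s A := by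
  induction ht with
  | neg _ ih => exact .neg ih
  | impL _ ih => exact .impL ih
  | impR _ ih => exact .impR ih
  | boxT htu => exact .boxT (hst.trans htu)
  | boxF _ ih => exact .boxF ih

theorem OccRoot.of_subTm (ht : OccRoot R t) (hst : SubTm s t) : OccRoot R s :=
  let ⟨A, hA, htA⟩ := ht
  ⟨A, hA, htA.of_subTm hst⟩

/-! ### Closed tableaux in terms of rule applications -/

/-- A closed branch: one satisfying one of the four closure conditions of `TabN`. -/
inductive IsClosedBranch (cs : ConstSpec L) (Γ : Set Node) : Prop
  | fml {A : Fml} : Node.fml A ∈ Γ → Node.fml (.neg A) ∈ Γ → IsClosedBranch cs Γ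
  | ev {t : Term} {A : Fml} : Node.pos t A ∈ Γ → Node.neg t A ∈ Γ → IsClosedBranch cs Γ
  | bot : Node.fml .bot ∈ Γ → IsClosedBranch cs Γ
  | const {c : ℕ} {F : Fml} : Fml.box (.const c) F ∈ cs.set →
      Node.fml (.neg (.box (.const c) F)) ∈ Γ → IsClosedBranch cs Γ

theorem IsClosedBranch.tab (h : IsClosedBranch cs Γ) : Tab L cs pb cut R Γ := by
  cases h with
  | fml hA hnA => exact ⟨0, .closeF hA hnA⟩
  | ev hA hnA => exact ⟨0, .closeE hA hnA⟩
  | bot h => exact ⟨0, .closeBot h⟩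
  | const hF hnF => exact ⟨0, .closeCS hF hnF⟩

theorem RuleApp.tab (h : RuleApp L cs R Γ exts) (hexts : ∀ Γ' ∈ exts, Tab L cs true cut R Γ') :
    Tab L cs true cut R Γ := by
  cases h <;> simp only [List.forall_mem_cons, List.not_mem_nil, false_imp_iff, implies_true,
    and_true] at hexts
  case' tImp | rulePB | rulePBe => obtain ⟨⟨m, hm⟩, n, hn⟩ := hexts
  case' fNeg | fImp | te | fe | plusL | plusR | appR | ruleT | ruleD | rule4 | ruleB | rule5 =>
    obtain ⟨n, hn⟩ := hexts
  case fNeg h => exact ⟨_, .fNeg h hn⟩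
  case fImp h => exact ⟨_, .fImp h hn⟩
  case tImp h => exact ⟨_, .tImp h hm hn⟩
  case te h => exact ⟨_, .te h hn⟩
  case fe h => exact ⟨_, .fe h hn⟩
  case plusL h => exact ⟨_, .plusL h hn⟩
  case plusR h => exact ⟨_, .plusR h hn⟩
  case appR hs ht hsub hocc => exact ⟨_, .appR hs ht hsub hocc hn⟩
  case rulePB hsub => exact ⟨_, .rulePB rfl hsub hm hn⟩
  case rulePBe hsub hocc => exact ⟨_, .rulePBe rfl hsub hocc hm hn⟩
  case ruleT hL h => exact ⟨_, .ruleT hL h hn⟩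
  case ruleD hL h => exact ⟨_, .ruleD hL h hn⟩
  case rule4 hL h => exact ⟨_, .rule4 hL h hn⟩
  case ruleB hL h => exact ⟨_, .ruleB hL h hn⟩
  case rule5 hL h => exact ⟨_, .rule5 hL h hn⟩

@[elab_as_elim]
theorem Tab.induction {motive : Set Node → Prop}
    (closed : ∀ {Γ}, IsClosedBranch cs Γ → motive Γ)
    (rule : ∀ {Γ exts}, RuleApp L cs R Γ exts → (∀ Γ' ∈ exts, motive Γ') → motive Γ)
    (cutF : ∀ {Γ A}, cut = true →
      motive (insert (.fml A) Γ) → motive (insert (.fml (.neg A)) Γ) → motive Γ)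
    (cutE : ∀ {Γ t A}, cut = true →
      motive (insert (.pos t A) Γ) → motive (insert (.neg t A) Γ) → motive Γ)
    (h : Tab L cs pb cut R Γ) : motive Γ := by
  obtain ⟨n, h⟩ := h
  induction h with
  | closeF hA hnA => exact closed (.fml hA hnA)
  | closeE hA hnA => exact closed (.ev hA hnA)
  | closeBot h => exact closed (.bot h)
  | closeCS hF hnF => exact closed (.const hF hnF)
  | fNeg h _ ih => exact rule (.fNeg h) (by simpa using ih)
  | fImp h _ ih => exact rule (.fImp h) (by simpa using ih)
  | tImp h _ _ ihA ihB => exact rule (.tImp h) (by simpa using ⟨ihA, ihB⟩)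
  | te h _ ih => exact rule (.te h) (by simpa using ih)
  | fe h _ ih => exact rule (.fe h) (by simpa using ih)
  | plusL h _ ih => exact rule (.plusL h) (by simpa using ih)
  | plusR h _ ih => exact rule (.plusR h) (by simpa using ih)
  | appR hs ht hsub hocc _ ih => exact rule (.appR hs ht hsub hocc) (by simpa using ih)
  | rulePB _ hsub _ _ ihA ihnA => exact rule (.rulePB hsub) (by simpa using ⟨ihA, ihnA⟩)
  | rulePBe _ hsub hocc _ _ ihA ihnA =>
    exact rule (.rulePBe hsub hocc) (by simpa using ⟨ihA, ihnA⟩)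
  | cutF hcut _ _ ihA ihnA => exact cutF hcut ihA ihnA
  | cutE hcut _ _ ihA ihnA => exact cutE hcut ihA ihnA
  | ruleT hL h _ ih => exact rule (.ruleT hL h) (by simpa using ih)
  | ruleD hL h _ ih => exact rule (.ruleD hL h) (by simpa using ih)
  | rule4 hL h _ ih => exact rule (.rule4 hL h) (by simpa using ih)
  | ruleB hL h _ ih => exact rule (.ruleB hL h) (by simpa using ih)
  | rule5 hL h _ ih => exact rule (.rule5 hL h) (by simpa using ih)

/-! ### Compactness -/

/-- Some finite subset of `S` has the property that `p` holds for all its supersets. For the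
property of having a closed continuation this expresses compactness together with weakening. -/
def HasFiniteCore {α : Type*} (p : Set α → Prop) (S : Set α) : Prop :=
  ∃ F ⊆ S, F.Finite ∧ ∀ S', F ⊆ S' → p S'

namespace HasFiniteCore

variable {α ι : Type*} {p q : Set α → Prop} {S : Set α} {a : α}

theorem of_forall (h : ∀ S, p S) : HasFiniteCore p S :=
  ⟨∅, Set.empty_subset S, Set.finite_empty, fun S' _ => h S'⟩

theorem of_mem (ha : a ∈ S) : HasFiniteCore (a ∈ ·) S :=
  ⟨{a}, Set.singleton_subset_iff.2 ha, Set.finite_singleton a, fun _ => Set.singleton_subset_iff.1⟩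

theorem mono (hp : HasFiniteCore p S) (hpq : ∀ S, p S → q S) : HasFiniteCore q S :=
  let ⟨F, hFS, hF, hFp⟩ := hp
  ⟨F, hFS, hF, fun S' hS' => hpq S' (hFp S' hS')⟩

theorem and (hp : HasFiniteCore p S) (hq : HasFiniteCore q S) :
    HasFiniteCore (fun S' => p S' ∧ q S') S :=
  let ⟨F, hFS, hF, hFp⟩ := hp
  let ⟨G, hGS, hG, hGq⟩ := hq
  ⟨F ∪ G, Set.union_subset hFS hGS, hF.union hG, fun S' hS' =>
    ⟨hFp S' (Set.subset_union_left.trans hS'), hGq S' (Set.subset_union_right.trans hS')⟩⟩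

theorem forall_mem_list {p : ι → Set α → Prop} :
    ∀ {l : List ι}, (∀ i ∈ l, HasFiniteCore (p i) S) → HasFiniteCore (fun S' => ∀ i ∈ l, p i S') S
  | [], _ => of_forall fun _ => List.forall_mem_nil _
  | _ :: _, h => by
    rw [List.forall_mem_cons] at h
    simpa only [List.forall_mem_cons] using h.1.and (forall_mem_list h.2)

theorem of_union {N : Set α} (h : HasFiniteCore p (N ∪ S)) :
    HasFiniteCore (fun S' => p (N ∪ S')) S :=
  let ⟨F, hFS, hF, hFp⟩ := h
  ⟨F \ N, Set.sdiff_subset_iff.2 hFS, hF.sdiff, fun S' hS' =>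
    hFp (N ∪ S') (Set.sdiff_subset_iff.1 hS')⟩

theorem of_insert (h : HasFiniteCore p (insert a S)) :
    HasFiniteCore (fun S' => p (insert a S')) S :=
  of_union (N := {a}) h

theorem exists_of_directedOn {c : Set (Set α)} (hne : c.Nonempty) (hc : DirectedOn (· ⊆ ·) c)
    (h : HasFiniteCore p (⋃₀ c)) : ∃ S ∈ c, p S :=
  let ⟨_, hFc, hF, hFp⟩ := h
  let ⟨S, hS, hFS⟩ := DirectedOn.exists_mem_subset_of_finite_of_subset_sUnion hne hc hF hFc
  ⟨S, hS, hFp S hFS⟩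

end HasFiniteCore

theorem IsClosedBranch.hasFiniteCore (h : IsClosedBranch cs Γ) :
    HasFiniteCore (IsClosedBranch cs) Γ := by
  cases h with
  | fml hA hnA => exact ((HasFiniteCore.of_mem hA).and (.of_mem hnA)).mono fun _ h => .fml h.1 h.2
  | ev hA hnA => exact ((HasFiniteCore.of_mem hA).and (.of_mem hnA)).mono fun _ h => .ev h.1 h.2
  | bot h => exact (HasFiniteCore.of_mem h).mono fun _ => .bot
  | const hF hnF => exact (HasFiniteCore.of_mem hnF).mono fun _ => .const hF

theorem RuleApp.exists_hasFiniteCore (h : RuleApp L cs R Γ exts) :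
    ∃ news : List (Set Node), exts = news.map (· ∪ Γ) ∧
      HasFiniteCore (fun Γ' => RuleApp L cs R Γ' (news.map (· ∪ Γ'))) Γ := by
  cases h with
  | fNeg h => exact ⟨[{_}], rfl, (HasFiniteCore.of_mem h).mono fun _ => .fNeg⟩
  | @fImp A B h =>
    refine ⟨[{.fml A, .fml (.neg B)}], ?_, (HasFiniteCore.of_mem h).mono fun _ h => ?_⟩
    · simp [Set.insert_union]
    · simpa [Set.insert_union] using RuleApp.fImp h
  | tImp h => exact ⟨[{_}, {_}], rfl, (HasFiniteCore.of_mem h).mono fun _ => .tImp⟩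
  | te h => exact ⟨[{_}], rfl, (HasFiniteCore.of_mem h).mono fun _ => .te⟩
  | fe h => exact ⟨[{_}], rfl, (HasFiniteCore.of_mem h).mono fun _ => .fe⟩
  | plusL h => exact ⟨[{_}], rfl, (HasFiniteCore.of_mem h).mono fun _ => .plusL⟩
  | plusR h => exact ⟨[{_}], rfl, (HasFiniteCore.of_mem h).mono fun _ => .plusR⟩
  | appR hs ht hsub hocc =>
    exact ⟨[{_}], rfl, ((HasFiniteCore.of_mem hs).and (.of_mem ht)).mono
      fun _ h => .appR h.1 h.2 hsub hocc⟩
  | rulePB hsub => exact ⟨[{_}, {_}], rfl, .of_forall fun _ => .rulePB hsub⟩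
  | rulePBe hsub hocc => exact ⟨[{_}, {_}], rfl, .of_forall fun _ => .rulePBe hsub hocc⟩
  | ruleT hL h => exact ⟨[{_}], rfl, (HasFiniteCore.of_mem h).mono fun _ => .ruleT hL⟩
  | ruleD hL h => exact ⟨[{_}], rfl, (HasFiniteCore.of_mem h).mono fun _ => .ruleD hL⟩
  | rule4 hL h => exact ⟨[{_}], rfl, (HasFiniteCore.of_mem h).mono fun _ => .rule4 hL⟩
  | ruleB hL h => exact ⟨[{_}], rfl, (HasFiniteCore.of_mem h).mono fun _ => .ruleB hL⟩
  | rule5 hL h => exact ⟨[{_}], rfl, (HasFiniteCore.of_mem h).mono fun _ => .rule5 hL⟩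

theorem RuleApp.subset (h : RuleApp L cs R Γ exts) {Γ' : Set Node} (hΓ' : Γ' ∈ exts) : Γ ⊆ Γ' := by
  obtain ⟨news, rfl, -⟩ := h.exists_hasFiniteCore
  obtain ⟨N, -, rfl⟩ := List.mem_map.1 hΓ'
  exact Set.subset_union_right

theorem Tab.hasFiniteCore (h : Tab L cs true cut R Γ) :
    HasFiniteCore (Tab L cs true cut R) Γ := by
  refine h.induction ?_ ?_ ?_ ?_
  · exact fun hclosed => hclosed.hasFiniteCore.mono fun _ => IsClosedBranch.tab
  · rintro Γ exts hrule ih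
    obtain ⟨news, rfl, hcore⟩ := hrule.exists_hasFiniteCore
    rw [List.forall_mem_map] at ih
    exact (hcore.and (.forall_mem_list fun N hN => (ih N hN).of_union)).mono
      fun Γ' h => h.1.tab (List.forall_mem_map.2 h.2)
  · intro Γ A hcut ih ihn
    exact (ih.of_insert.and ihn.of_insert).mono fun _ ⟨⟨_, h⟩, _, hn⟩ => ⟨_, .cutF hcut h hn⟩
  · intro Γ t A hcut ih ihn
    exact (ih.of_insert.and ihn.of_insert).mono fun _ ⟨⟨_, h⟩, _, hn⟩ => ⟨_, .cutE hcut h hn⟩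

/-! ### Saturated branches -/

/-- An open branch on which every rule application is redundant: at least one of the extended
branches adds nothing. -/
structure IsSaturated (L : Logic) (cs : ConstSpec L) (R : Set Fml) (Γ : Set Node) : Prop where
  not_isClosedBranch : ¬ IsClosedBranch cs Γ
  exists_subset {exts : List (Set Node)} : RuleApp L cs R Γ exts → ∃ Γ' ∈ exts, Γ' ⊆ Γ

theorem isSaturated_of_maximal (h : Maximal (fun Γ => ¬ Tab L cs true cut R Γ) Γ) :
    IsSaturated L cs R Γ where
  not_isClosedBranch hΓ := h.prop hΓ.tab
  exists_subset hrule := by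
    by_contra! hexts
    refine h.prop (hrule.tab fun Γ' hΓ' => ?_)
    by_contra hopen
    exact hexts Γ' hΓ' (h.le_of_ge hopen (hrule.subset hΓ'))

theorem exists_isSaturated_superset (h : ¬ Tab L cs true cut R Γ) :
    ∃ Γ', Γ ⊆ Γ' ∧ IsSaturated L cs R Γ' := by
  suffices ∃ Γ', Γ ⊆ Γ' ∧ Maximal (fun Γ => ¬ Tab L cs true cut R Γ) Γ' from
    this.imp fun _ hΓ' => hΓ'.imp_right isSaturated_of_maximal
  refine zorn_subset_nonempty {Γ | ¬ Tab L cs true cut R Γ} (fun c hc hchain hne => ?_) Γ h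
  refine ⟨⋃₀ c, fun htab => ?_, fun Γ' hΓ' => Set.subset_sUnion_of_mem hΓ'⟩
  obtain ⟨Γ', hΓ', htab⟩ := htab.hasFiniteCore.exists_of_directedOn hne hchain.directedOn
  exact hc hΓ' htab

namespace IsSaturated

theorem subset_of_ruleApp (H : IsSaturated L cs R Γ) {Γ' : Set Node}
    (h : RuleApp L cs R Γ [Γ']) : Γ' ⊆ Γ := by
  simpa using H.exists_subset h

theorem mem_of_ruleApp (H : IsSaturated L cs R Γ) (h : RuleApp L cs R Γ [insert X Γ]) : X ∈ Γ :=
  H.subset_of_ruleApp h (Set.mem_insert X Γ)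

theorem mem_or_mem_of_ruleApp (H : IsSaturated L cs R Γ)
    (h : RuleApp L cs R Γ [insert X Γ, insert Y Γ]) : X ∈ Γ ∨ Y ∈ Γ := by
  simpa [Set.insert_subset_iff] using H.exists_subset h

end IsSaturated

/-! ### The structure induced by a branch -/

/-- The closure of a set of terms under `s ↦ s + t` and `t ↦ s + t`, as in condition E2. -/
inductive SumClosure (S : Set Term) : Term → Prop
  | basic {t : Term} : t ∈ S → SumClosure S t
  | left {s t : Term} : SumClosure S s → SumClosure S (.sum s t)
  | right {s t : Term} : SumClosure S t → SumClosure S (.sum s t)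

mutual
/-- Truth in the structure induced by the branch `Γ`; see `branchModel`. -/
def branchSat (L : Logic) (Γ : Set Node) : Fml → Prop
  | .prop n => Node.fml (.prop n) ∈ Γ
  | .bot => False
  | .neg A => ¬ branchSat L Γ A
  | .imp A B => branchSat L Γ A → branchSat L Γ B
  | .box t A => branchEv L Γ A t

/-- The terms admitted as evidence for a formula in the structure induced by the branch `Γ`: those
generated by `+` from the nodes `[t,A]` on `Γ` and from the terms that conditions E6–E8 of
`IsModel` require. -/
def branchEv (L : Logic) (Γ : Set Node) : Fml → Term → Prop
  | .box u B => SumClosure {t | Node.pos t (.box u B) ∈ Γ ∨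
      L.has4 = true ∧ t = .bang u ∧ branchEv L Γ B u}
  | .neg (.box u B) => SumClosure {t | Node.pos t (.neg (.box u B)) ∈ Γ ∨
      L.hasB = true ∧ t = .qbar u ∧ ¬ branchSat L Γ B ∨
      L.has5 = true ∧ t = .quest u ∧ ¬ branchEv L Γ B u}
  | A => SumClosure {t | Node.pos t A ∈ Γ}
end

/-- The structure induced by the branch `Γ`. It need not satisfy condition E1 of `IsModel`. -/
def branchModel (L : Logic) (Γ : Set Node) : MModel where
  ev t := {A | branchEv L Γ A t}
  val n := Node.fml (.prop n) ∈ Γ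

/-- The instances of `A ∈ E(t)` that generate the evidence of `branchModel L Γ` under `+`, expressed
through the model `M` itself. -/
inductive BasicEvidence (L : Logic) (Γ : Set Node) (M : MModel) : Fml → Term → Prop
  | mem {t : Term} {A : Fml} : Node.pos t A ∈ Γ → BasicEvidence L Γ M A t
  | bang {u : Term} {B : Fml} : L.has4 = true → B ∈ M.ev u →
      BasicEvidence L Γ M (.box u B) (.bang u)
  | qbar {u : Term} {B : Fml} : L.hasB = true → ¬ M.sat B →
      BasicEvidence L Γ M (.neg (.box u B)) (.qbar u)
  | quest {u : Term} {B : Fml} : L.has5 = true → B ∉ M.ev u →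
      BasicEvidence L Γ M (.neg (.box u B)) (.quest u)

theorem branchModel_sat_iff : (branchModel L Γ).sat A ↔ branchSat L Γ A := by
  induction A with
  | prop n => rw [branchSat]; rfl
  | bot => rw [branchSat]; rfl
  | neg A ih => rw [branchSat, MModel.sat, ih]
  | imp A B ihA ihB => rw [branchSat, MModel.sat, ihA, ihB]
  | box t A => rw [branchSat]; rfl

theorem mem_branchModel_ev_iff :
    A ∈ (branchModel L Γ).ev t ↔ SumClosure {t | BasicEvidence L Γ (branchModel L Γ) A t} t := by
  suffices branchEv L Γ A = SumClosure {t | BasicEvidence L Γ (branchModel L Γ) A t} from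
    iff_of_eq (congrFun this t)
  cases A with
  | prop | bot | imp =>
    rw [branchEv]
    · congr with t
      exact ⟨.mem, fun | .mem h => h⟩
    all_goals nofun
  | box u B =>
    rw [branchEv]
    congr with t
    refine ⟨?_, ?_⟩
    · rintro (h | ⟨h4, rfl, hB⟩)
      exacts [.mem h, .bang h4 hB]
    · rintro (h | ⟨h4, hB⟩)
      exacts [.inl h, .inr ⟨h4, rfl, hB⟩]
  | neg C =>
    cases C with
    | box u B =>
      rw [branchEv]
      congr with t
      refine ⟨?_, ?_⟩
      · rintro (h | ⟨hB, rfl, hsat⟩ | ⟨h5, rfl, hev⟩)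
        exacts [.mem h, .qbar hB (mt branchModel_sat_iff.1 hsat), .quest h5 hev]
      · rintro (h | _ | ⟨hB, hsat⟩ | ⟨h5, hev⟩)
        exacts [.inl h, .inr (.inl ⟨hB, rfl, mt branchModel_sat_iff.2 hsat⟩),
          .inr (.inr ⟨h5, rfl, hev⟩)]
    | prop | bot | neg | imp =>
      rw [branchEv]
      · congr with t
        exact ⟨.mem, fun | .mem h => h⟩
      all_goals nofun

theorem BasicEvidence.mem_ev (h : BasicEvidence L Γ (branchModel L Γ) A t) :
    A ∈ (branchModel L Γ).ev t :=
  mem_branchModel_ev_iff.2 (.basic h)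

/-! ### Restricted models -/

/-- The conditions on an M-model for JL_CS with E1 weakened to the instances in which `A → B` is a
CS-subformula and `s · t` occurs in the root, as in the side conditions of the rule (·). -/
structure IsRestrictedModel (L : Logic) (cs : ConstSpec L) (R : Set Fml) (M : MModel) : Prop where
  e1 : ∀ s t A B, Fml.imp A B ∈ M.ev s → A ∈ M.ev t → CSSub cs R (.imp A B) →
    OccRoot R (.app s t) → B ∈ M.ev (.app s t)
  e2l : ∀ s t, M.ev s ⊆ M.ev (.sum s t)
  e2r : ∀ s t, M.ev t ⊆ M.ev (.sum s t)
  e3 : ∀ c F, Fml.box (.const c) F ∈ cs.set → F ∈ M.ev (.const c)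
  e4 : L.hasT = true → ∀ t A, A ∈ M.ev t → M.sat A
  e5 : L.hasD = true → ∀ t, Fml.bot ∉ M.ev t
  e6 : L.has4 = true → ∀ t A, A ∈ M.ev t → Fml.box t A ∈ M.ev (.bang t)
  e7 : L.hasB = true → ∀ t A, ¬ M.sat A → Fml.neg (.box t A) ∈ M.ev (.qbar t)
  e8 : L.has5 = true → ∀ t A, A ∉ M.ev t → Fml.neg (.box t A) ∈ M.ev (.quest t)

/-! ### Soundness -/

theorem IsClosedBranch.not_forall_nodeSat (hM : IsRestrictedModel L cs R M)
    (h : IsClosedBranch cs Γ) : ¬ ∀ X ∈ Γ, NodeSat M X := by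
  intro hΓ
  cases h with
  | fml hA hnA => exact hΓ _ hnA (hΓ _ hA)
  | ev hA hnA => exact hΓ _ hnA (hΓ _ hA)
  | bot h => exact hΓ _ h
  | const hF hnF => exact hΓ _ hnF (hM.e3 _ _ hF)

theorem RuleApp.exists_forall_nodeSat (hM : IsRestrictedModel L cs R M)
    (h : RuleApp L cs R Γ exts) (hΓ : ∀ X ∈ Γ, NodeSat M X) :
    ∃ Γ' ∈ exts, ∀ X ∈ Γ', NodeSat M X := by
  cases h <;> simp only [List.mem_cons, List.not_mem_nil, or_false, exists_eq_or_imp,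
    exists_eq_left, Set.forall_mem_insert, and_iff_left hΓ]
  case fNeg h => exact not_not.1 (hΓ _ h)
  case fImp h => exact Classical.not_imp.1 (hΓ _ h)
  case tImp h => exact imp_iff_not_or.1 (hΓ _ h)
  case te h => exact (hΓ _ h :)
  case fe h => exact (hΓ _ h :)
  case plusL h => exact mt (@hM.e2l _ _ _) (hΓ _ h)
  case plusR h => exact mt (@hM.e2r _ _ _) (hΓ _ h)
  case appR hs ht hsub hocc => exact hM.e1 _ _ _ _ (hΓ _ hs) (hΓ _ ht) hsub hocc
  case rulePB => exact em _
  case rulePBe => exact em _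
  case ruleT hL h => exact hM.e4 hL _ _ (hΓ _ h)
  case ruleD hL h => exact hM.e5 hL _ (hΓ _ h)
  case rule4 hL h => exact mt (hM.e6 hL _ _) (hΓ _ h)
  case ruleB hL h => exact not_imp_comm.1 (hM.e7 hL _ _) (hΓ _ h)
  case rule5 hL h => exact not_imp_comm.1 (hM.e8 hL _ _) (hΓ _ h)

theorem Tab.not_forall_nodeSat (hM : IsRestrictedModel L cs R M) (h : Tab L cs pb cut R Γ) :
    ¬ ∀ X ∈ Γ, NodeSat M X := by
  refine h.induction ?_ ?_ ?_ ?_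
  · exact fun hclosed => hclosed.not_forall_nodeSat hM
  · intro Γ exts hrule ih hΓ
    obtain ⟨Γ', hΓ', hsat⟩ := hrule.exists_forall_nodeSat hM hΓ
    exact ih Γ' hΓ' hsat
  all_goals simp only [Set.forall_mem_insert]
  · exact fun _ ih ihn hΓ => ihn ⟨fun hA => ih ⟨hA, hΓ⟩, hΓ⟩
  · exact fun _ ih ihn hΓ => ihn ⟨fun hA => ih ⟨hA, hΓ⟩, hΓ⟩

/-! ### The model of a saturated branch -/

theorem Fml.sizeOf_pos : (A : Fml) → 0 < sizeOf A
  | .prop _ | .bot | .neg _ | .imp _ _ | .box _ _ => by simp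

namespace IsSaturated

theorem nodeSat_branchModel (H : IsSaturated L cs R Γ) :
    ∀ {X : Node}, X ∈ Γ → NodeSat (branchModel L Γ) X
  | .fml (.prop _), h => h
  | .fml .bot, h => H.not_isClosedBranch (.bot h)
  | .fml (.neg (.prop _)), hn => fun h => H.not_isClosedBranch (.fml h hn)
  | .fml (.neg .bot), _ => id
  | .fml (.neg (.neg A)), h => not_not.2 (H.nodeSat_branchModel (H.mem_of_ruleApp (.fNeg h)))
  | .fml (.neg (.imp A B)), h =>
    have hAB := Set.insert_subset_iff.1 (H.subset_of_ruleApp (.fImp h))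
    Classical.not_imp.2 ⟨H.nodeSat_branchModel hAB.1,
      H.nodeSat_branchModel (X := .fml (.neg B)) (hAB.2 (Set.mem_insert _ _))⟩
  | .fml (.neg (.box t A)), h =>
    H.nodeSat_branchModel (X := .neg t A) (H.mem_of_ruleApp (.fe h))
  | .fml (.imp A B), h =>
    have := B.sizeOf_pos
    imp_iff_not_or.2 <| (H.mem_or_mem_of_ruleApp (.tImp h)).imp
      (fun hA => H.nodeSat_branchModel (X := .fml (.neg A)) hA)
      (fun hB => H.nodeSat_branchModel (X := .fml B) hB)
  | .fml (.box t A), h => (BasicEvidence.mem (H.mem_of_ruleApp (.te h))).mem_ev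
  | .pos t A, h => (BasicEvidence.mem h).mem_ev
  | .neg t A, h => fun hA => by
    cases mem_branchModel_ev_iff.1 hA with
    | basic hA =>
      cases hA with
      | mem hA => exact H.not_isClosedBranch (.ev hA h)
      | @bang u B hL hB =>
        exact H.nodeSat_branchModel (X := .neg u B) (H.mem_of_ruleApp (.rule4 hL h)) hB
      | @qbar u B hL hB =>
        exact hB (H.nodeSat_branchModel (X := .fml B) (H.mem_of_ruleApp (.ruleB hL h)))
      | quest hL hB => exact hB (BasicEvidence.mem (H.mem_of_ruleApp (.rule5 hL h))).mem_ev
    | @left s t hs =>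
      exact H.nodeSat_branchModel (X := .neg s A) (H.mem_of_ruleApp (.plusL h))
        (mem_branchModel_ev_iff.2 hs)
    | @right s t ht =>
      exact H.nodeSat_branchModel (X := .neg t A) (H.mem_of_ruleApp (.plusR h))
        (mem_branchModel_ev_iff.2 ht)
termination_by X => sizeOf X

theorem pos_mem_of_mem_ev (H : IsSaturated L cs R Γ) (hA : A ∈ (branchModel L Γ).ev t)
    (hsub : CSSub cs R A) (hocc : OccRoot R t) : Node.pos t A ∈ Γ :=
  (H.mem_or_mem_of_ruleApp (.rulePBe hsub hocc)).resolve_right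
    fun h => H.nodeSat_branchModel h hA

theorem pos_const_mem (H : IsSaturated L cs R Γ) {c : ℕ} {F : Fml}
    (hF : Fml.box (.const c) F ∈ cs.set) : Node.pos (.const c) F ∈ Γ :=
  H.mem_of_ruleApp <| .te <|
    (H.mem_or_mem_of_ruleApp (.rulePB (.inr ⟨_, hF, .refl _⟩))).resolve_right
      fun h => H.not_isClosedBranch (.const hF h)

theorem sat_of_mem_ev (H : IsSaturated L cs R Γ) (hT : L.hasT = true) :
    ∀ {A t}, A ∈ (branchModel L Γ).ev t → (branchModel L Γ).sat A
  | A, t, hA => by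
    rw [mem_branchModel_ev_iff] at hA
    induction hA with
    | basic h =>
      cases h with
      | mem h => exact H.nodeSat_branchModel (H.mem_of_ruleApp (.ruleT hT h))
      | bang _ hB => exact hB
      | qbar _ hB => exact mt (H.sat_of_mem_ev hT) hB
      | quest _ hB => exact hB
    | left _ ih => exact ih
    | right _ ih => exact ih
termination_by A => sizeOf A

theorem bot_notMem_ev (H : IsSaturated L cs R Γ) (hD : L.hasD = true) :
    Fml.bot ∉ (branchModel L Γ).ev t := by
  intro hbot
  rw [mem_branchModel_ev_iff] at hbot
  induction hbot with
  | basic h =>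
    obtain ⟨h⟩ := h
    exact H.not_isClosedBranch (.bot (H.mem_of_ruleApp (.ruleD hD h)))
  | left _ ih => exact ih
  | right _ ih => exact ih

theorem isRestrictedModel (H : IsSaturated L cs R Γ) :
    IsRestrictedModel L cs R (branchModel L Γ) where
  e1 s t A B hs ht hsub hocc := by
    have hs := H.pos_mem_of_mem_ev hs hsub (hocc.of_subTm (.appL (.refl s)))
    have ht := H.pos_mem_of_mem_ev ht (hsub.of_subf (.impL (.refl A)))
      (hocc.of_subTm (.appR (.refl t)))
    exact (BasicEvidence.mem (H.mem_of_ruleApp (.appR hs ht hsub hocc))).mem_ev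
  e2l s t A hA := mem_branchModel_ev_iff.2 (.left (mem_branchModel_ev_iff.1 hA))
  e2r s t A hA := mem_branchModel_ev_iff.2 (.right (mem_branchModel_ev_iff.1 hA))
  e3 c F hF := (BasicEvidence.mem (H.pos_const_mem hF)).mem_ev
  e4 hT t A := H.sat_of_mem_ev hT
  e5 hD t := H.bot_notMem_ev hD
  e6 h4 t A hA := (BasicEvidence.bang h4 hA).mem_ev
  e7 hB t A hA := (BasicEvidence.qbar hB hA).mem_ev
  e8 h5 t A hA := (BasicEvidence.quest h5 hA).mem_ev

end IsSaturated

theorem cut_elimination_general (h : Tab L cs pb cut R Γ) : Tab L cs true false R Γ := by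
  by_contra hopen
  obtain ⟨Γ', hΓ', hsat⟩ := exists_isSaturated_superset hopen
  exact h.not_forall_nodeSat hsat.isRestrictedModel fun X hX =>
    hsat.nodeSat_branchModel (hΓ' hX)

end JLTab

/-- Theorem 6, Cut Elimination: if a JL-formula is provable in
JL^e_CS + (cut), then it is provable in JL^e_CS without the unrestricted cut
rules. -/
theorem JLTab.cut_elimination (L : Logic) (cs : ConstSpec L) (A : Fml)
    (h : TabProof L cs true true A) : TabProof L cs true false A :=
  cut_elimination_general h
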